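/- arXiv:1607.00852 — 2 statements merged into one kernel-verified Lean document; each statement's English description precedes it below -/
import Mathlib

section
/- Poisson integral representation on a spherical cap: Let ζ ∈ S², ρ ∈ (0,2), let e₁, e₂ be an orthonormal pair perpendicular to ζ, and set c(θ) = (1−ρ)ζ + √(ρ(2−ρ))·(cos θ · e₁ + sin θ · e₂). Let U : S² → ℝ be such that its degree-zero homogeneous extension V(x) = U(x/‖x‖) is twice continuously differentiable on the open cone C(Γ') for some open Γ' ⊆ S² containing the closed cap {η ∈ S² : 1 − ζ·η ≤ ρ}, and suppose the Euclidean Laplacian ΔV vanishes on C(Γ_ρ(ζ)). Then for every ξ ∈ Γ_ρ(ζ): U(ξ) = ((ξ·ζ + ρ − 1)/(2π)) · ∫₀^{2π} U(c(θ)) / (1 − ξ·c(θ)) dθ. -/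
/-!
Stereographic projection from `-ζ` carries the cap onto a disk. Since `V` is homogeneous of degree
zero, the projection need not be normalised: it may be replaced by the polynomial map
`P(x + iy) = 2x e₁ + 2y e₂ + (1 - x² - y²) ζ`, and `V ∘ P` then represents `U` on the disk of radius
`R = √(ρ / (2 - ρ))`, whose boundary circle is sent to positive multiples of the `c θ`.

With `p = P z`, the chain rule gives
`Δ(V ∘ P) = D²V(2e₁ - 2xζ)² + D²V(2e₂ - 2yζ)² - 4 DV(ζ) = 4 ΔV - 4 (D²V(ζ, p) + DV(ζ))`,
and the last bracket vanishes on differentiating Euler's relation `DV(y) y = 0` at `p` in the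
direction `ζ`. So `V ∘ P` is harmonic in the disk (`harmonicAt_comp_stereoMap`) and continuous
up to the boundary. The planar Poisson formula applies, and the planar kernel is transformed
into the spherical one by elementary algebra.
-/

open MeasureTheory Real intervalIntegral
open scoped RealInnerProductSpace

noncomputable section

/-- ℝ³ as Euclidean space. -/
abbrev E3 : Type := EuclideanSpace ℝ (Fin 3)

/-- The coordinate Laplacian of a function u : ℝ³ → ℝ. -/
def lap (u : E3 → ℝ) (x : E3) : ℝ :=
  ∑ i : Fin 3, fderiv ℝ (fun y => fderiv ℝ u y (EuclideanSpace.single i 1)) x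
    (EuclideanSpace.single i 1)

/-- The open cone over a subset Γ of the unit sphere. -/
def cone (Γ : Set E3) : Set E3 := {x : E3 | x ≠ 0 ∧ ‖x‖⁻¹ • x ∈ Γ}

/-- The open spherical cap with center ζ and radius ρ. -/
def cap (ρ : ℝ) (ζ : E3) : Set E3 :=
  {η : E3 | η ∈ Metric.sphere (0 : E3) 1 ∧ 1 - ⟪ζ, η⟫ < ρ}

open InnerProductSpace Laplacian Topology

/-- Unnormalised inverse stereographic projection with respect to an orthonormal frame, from the
point `-b 2`: its value at `z` is `1 + |z|²` times the corresponding point of the unit sphere. -/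
def stereoMap (b : OrthonormalBasis (Fin 3) ℝ E3) (z : ℂ) : E3 :=
  (2 * z.re) • b 0 + (2 * z.im) • b 1 + (1 - (z.re ^ 2 + z.im ^ 2)) • b 2

/-- The Fréchet derivative of `stereoMap b` at `z`. -/
def stereoDeriv (b : OrthonormalBasis (Fin 3) ℝ E3) (z : ℂ) : ℂ →L[ℝ] E3 :=
  ((2 : ℝ) • Complex.reCLM).smulRight (b 0) + ((2 : ℝ) • Complex.imCLM).smulRight (b 1) -
    ((2 * z.re) • Complex.reCLM + (2 * z.im) • Complex.imCLM).smulRight (b 2)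

lemma stereoDeriv_apply (b : OrthonormalBasis (Fin 3) ℝ E3) (z v : ℂ) :
    stereoDeriv b z v = (2 * v.re) • b 0 + (2 * v.im) • b 1 -
      (2 * z.re * v.re + 2 * z.im * v.im) • b 2 := by
  simp [stereoDeriv]

lemma hasFDerivAt_stereoMap (b : OrthonormalBasis (Fin 3) ℝ E3) (z : ℂ) :
    HasFDerivAt (stereoMap b) (stereoDeriv b z) z := by
  have hre : HasFDerivAt (fun w : ℂ => w.re) Complex.reCLM z := Complex.reCLM.hasFDerivAt
  have him : HasFDerivAt (fun w : ℂ => w.im) Complex.imCLM z := Complex.imCLM.hasFDerivAt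
  have h := (((hre.const_mul 2).smul_const (b 0)).add ((him.const_mul 2).smul_const (b 1))).add
    (((hre.pow 2).add (him.pow 2)).const_sub 1 |>.smul_const (b 2))
  refine h.congr_fderiv ?_
  ext v : 1
  rw [stereoDeriv_apply]
  simp
  module

lemma contDiff_stereoMap (b : OrthonormalBasis (Fin 3) ℝ E3) :
    ContDiff ℝ 2 (stereoMap b) := by
  have hre : ContDiff ℝ 2 (fun w : ℂ => w.re) := Complex.reCLM.contDiff
  have him : ContDiff ℝ 2 (fun w : ℂ => w.im) := Complex.imCLM.contDiff
  unfold stereoMap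
  fun_prop

lemma hasFDerivAt_stereoDeriv_apply (b : OrthonormalBasis (Fin 3) ℝ E3) (z v : ℂ) :
    HasFDerivAt (fun w => stereoDeriv b w v)
      (-((2 * v.re) • Complex.reCLM + (2 * v.im) • Complex.imCLM).smulRight (b 2)) z := by
  have hre : HasFDerivAt (fun w : ℂ => w.re) Complex.reCLM z := Complex.reCLM.hasFDerivAt
  have him : HasFDerivAt (fun w : ℂ => w.im) Complex.imCLM z := Complex.imCLM.hasFDerivAt
  simp only [stereoDeriv_apply]
  have h := ((((hre.const_mul 2).mul_const v.re).add
    ((him.const_mul 2).mul_const v.im)).smul_const (b 2)).const_sub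
      ((2 * v.re) • b 0 + (2 * v.im) • b 1)
  refine h.congr_fderiv ?_
  ext w : 1
  simp
  module

lemma norm_stereoMap (b : OrthonormalBasis (Fin 3) ℝ E3) (z : ℂ) :
    ‖stereoMap b z‖ = 1 + (z.re ^ 2 + z.im ^ 2) := by
  have h : ‖stereoMap b z‖ ^ 2 = (1 + (z.re ^ 2 + z.im ^ 2)) ^ 2 := by
    rw [← real_inner_self_eq_norm_sq]
    simp only [stereoMap, inner_add_left, inner_add_right, real_inner_smul_left,
      real_inner_smul_right, b.inner_eq_ite]
    simp
    ring
  exact (pow_left_inj₀ (norm_nonneg _) (by positivity) two_ne_zero).1 h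

lemma inner_stereoMap (b : OrthonormalBasis (Fin 3) ℝ E3) (z : ℂ) :
    ⟪b 2, stereoMap b z⟫ = 1 - (z.re ^ 2 + z.im ^ 2) := by
  simp only [stereoMap, inner_add_right, real_inner_smul_right, b.inner_eq_ite]
  simp

lemma mem_cone_cap_iff (ρ : ℝ) (ζ x : E3) :
    x ∈ cone (cap ρ ζ) ↔ x ≠ 0 ∧ (1 - ρ) * ‖x‖ < ⟪ζ, x⟫ := by
  refine and_congr_right fun hx => ?_
  have hn : 0 < ‖x‖ := norm_pos_iff.2 hx
  simp only [cap, Set.mem_ofPred_eq, mem_sphere_zero_iff_norm, norm_smul, norm_inv, norm_norm,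
    inv_mul_cancel₀ hn.ne', true_and, real_inner_smul_right]
  rw [sub_lt_comm, inv_mul_eq_div, lt_div_iff₀ hn]

lemma isOpen_cone_cap (ρ : ℝ) (ζ : E3) : IsOpen (cone (cap ρ ζ)) := by
  have : cone (cap ρ ζ) = {x | x ≠ 0} ∩ {x | (1 - ρ) * ‖x‖ < ⟪ζ, x⟫} := by
    ext x; exact mem_cone_cap_iff ρ ζ x
  rw [this]
  exact isOpen_ne.inter (isOpen_lt (by fun_prop) (by fun_prop))

/-- The coordinate Laplacian is the trace of the second derivative in any orthonormal frame. -/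
lemma lap_eq_frame (b : OrthonormalBasis (Fin 3) ℝ E3) {V : E3 → ℝ} {p : E3}
    (h : ContDiffAt ℝ 2 V p) :
    lap V p = ∑ i, fderiv ℝ (fderiv ℝ V) p (b i) (b i) := by
  have hd : DifferentiableAt ℝ (fderiv ℝ V) p :=
    (h.fderiv_right (m := 1) (by norm_num)).differentiableAt one_ne_zero
  have h1 := congrFun (laplacian_eq_iteratedFDeriv_orthonormalBasis V b) p
  have h2 := congrFun (laplacian_eq_iteratedFDeriv_orthonormalBasis V
    (EuclideanSpace.basisFun (Fin 3) ℝ)) p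
  simp only [iteratedFDeriv_two_apply] at h1 h2
  rw [h1] at h2
  simp only [Matrix.cons_val_zero, Matrix.cons_val_one, EuclideanSpace.basisFun_apply] at h2
  rw [h2, lap]
  refine Finset.sum_congr rfl fun i _ => ?_
  rw [fderiv_clm_apply hd (differentiableAt_const _)]
  simp

/-- Euler's relation for a function that is homogeneous of degree zero. -/
lemma fderiv_self_eq_zero {V : E3 → ℝ} (hhom : ∀ (t : ℝ) (x : E3), 0 < t → V (t • x) = V x)
    {p : E3} (h : DifferentiableAt ℝ V p) : fderiv ℝ V p p = 0 := by
  have h1 : HasDerivAt (fun t : ℝ => t • p) p 1 := by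
    simpa using (hasDerivAt_id (1 : ℝ)).smul_const p
  have h2 : HasFDerivAt V (fderiv ℝ V p) ((1 : ℝ) • p) := by
    rw [one_smul]; exact h.hasFDerivAt
  have h3 := h2.comp_hasDerivAt (1 : ℝ) h1
  have h4 : HasDerivAt (V ∘ fun t : ℝ => t • p) 0 1 := by
    refine (hasDerivAt_const (1 : ℝ) (V p)).congr_of_eventuallyEq ?_
    filter_upwards [lt_mem_nhds (zero_lt_one (α := ℝ))] with t ht
    exact hhom t p ht
  exact h3.unique h4

/-- Euler's relation, differentiated once. -/
lemma snd_fderiv_self {V : E3 → ℝ} (hhom : ∀ (t : ℝ) (x : E3), 0 < t → V (t • x) = V x)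
    {p : E3} (h : ContDiffAt ℝ 2 V p) (v : E3) :
    fderiv ℝ (fderiv ℝ V) p v p = -fderiv ℝ V p v := by
  have hd : DifferentiableAt ℝ (fderiv ℝ V) p :=
    (h.fderiv_right (m := 1) (by norm_num)).differentiableAt one_ne_zero
  have h1 := hd.hasFDerivAt.clm_apply (hasFDerivAt_id p)
  have h2 : HasFDerivAt (fun y => fderiv ℝ V y (id y)) (0 : E3 →L[ℝ] ℝ) p := by
    refine (hasFDerivAt_const (0 : ℝ) p).congr_of_eventuallyEq ?_
    filter_upwards [h.eventually (by simp)] with y hy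
    exact fderiv_self_eq_zero hhom (hy.differentiableAt two_ne_zero)
  have h3 := congrArg (fun L : E3 →L[ℝ] ℝ => L v) (h1.unique h2)
  simp at h3
  linarith

lemma snd_fderiv_comp_stereoMap (b : OrthonormalBasis (Fin 3) ℝ E3) {V : E3 → ℝ} {z : ℂ}
    (h : ContDiffAt ℝ 2 V (stereoMap b z)) (v : ℂ) :
    fderiv ℝ (fderiv ℝ (V ∘ stereoMap b)) z v v =
      fderiv ℝ (fderiv ℝ V) (stereoMap b z) (stereoDeriv b z v) (stereoDeriv b z v) -
        2 * (v.re ^ 2 + v.im ^ 2) * fderiv ℝ V (stereoMap b z) (b 2) := by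
  have hc : ContDiffAt ℝ 2 (V ∘ stereoMap b) z := h.comp z (contDiff_stereoMap b).contDiffAt
  have hd : DifferentiableAt ℝ (fderiv ℝ V) (stereoMap b z) :=
    (h.fderiv_right (m := 1) (by norm_num)).differentiableAt one_ne_zero
  have hdc : DifferentiableAt ℝ (fderiv ℝ (V ∘ stereoMap b)) z :=
    (hc.fderiv_right (m := 1) (by norm_num)).differentiableAt one_ne_zero
  have h1 := (hd.hasFDerivAt.comp z (hasFDerivAt_stereoMap b z)).clm_apply
    (hasFDerivAt_stereoDeriv_apply b z v)
  have h2 := hdc.hasFDerivAt.clm_apply (hasFDerivAt_const v z)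
  have h3 := h2.congr_of_eventuallyEq (f₁ := fun y =>
      (fderiv ℝ V ∘ stereoMap b) y (stereoDeriv b y v)) (by
    have hcont : ContinuousAt (stereoMap b) z := (contDiff_stereoMap b).continuous.continuousAt
    filter_upwards [hcont.eventually (h.eventually (by simp))] with y hy
    have := (hy.differentiableAt two_ne_zero).hasFDerivAt.comp y (hasFDerivAt_stereoMap b y)
    rw [this.fderiv]
    simp)
  have h4 := congrArg (fun L : ℂ →L[ℝ] ℝ => L v) (h3.unique h1)
  simp at h4
  rw [h4]
  ring

lemma laplacian_comp_stereoMap (b : OrthonormalBasis (Fin 3) ℝ E3) {V : E3 → ℝ}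
    (hhom : ∀ (t : ℝ) (x : E3), 0 < t → V (t • x) = V x) {z : ℂ}
    (h : ContDiffAt ℝ 2 V (stereoMap b z)) :
    Δ (V ∘ stereoMap b) z = 4 * lap V (stereoMap b z) := by
  have hsymm : IsSymmSndFDerivAt ℝ V (stereoMap b z) :=
    h.isSymmSndFDerivAt (by simp)
  have hE := snd_fderiv_self hhom h (b 2)
  rw [congrFun (laplacian_eq_iteratedFDeriv_complexPlane (V ∘ stereoMap b)) z, lap_eq_frame b h]
  simp only [iteratedFDeriv_two_apply, Matrix.cons_val_zero, Matrix.cons_val_one]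
  rw [snd_fderiv_comp_stereoMap b h, snd_fderiv_comp_stereoMap b h]
  have h02 := hsymm.eq (b 0) (b 2)
  have h12 := hsymm.eq (b 1) (b 2)
  -- Only the argument `p` of `D²V(p)(ζ, p)` is to be expanded, not the base point.
  generalize fderiv ℝ (fderiv ℝ V) (stereoMap b z) = B at *
  generalize fderiv ℝ V (stereoMap b z) = L at *
  simp [stereoMap] at hE
  simp [stereoDeriv_apply, Fin.sum_univ_three]
  rw [h02, h12]
  linear_combination (-4) * hE

lemma harmonicAt_comp_stereoMap (b : OrthonormalBasis (Fin 3) ℝ E3) {V : E3 → ℝ} {s : Set E3}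
    (hs : IsOpen s) (hhom : ∀ (t : ℝ) (x : E3), 0 < t → V (t • x) = V x)
    (hV : ContDiffOn ℝ 2 V s) (hharm : ∀ x ∈ s, lap V x = 0) {z : ℂ} (hz : stereoMap b z ∈ s) :
    HarmonicAt (V ∘ stereoMap b) z := by
  have hcont : Continuous (stereoMap b) := (contDiff_stereoMap b).continuous
  refine ⟨(hV.contDiffAt (hs.mem_nhds hz)).comp z (contDiff_stereoMap b).contDiffAt, ?_⟩
  filter_upwards [hcont.continuousAt.eventually (hs.mem_nhds hz)] with y hy
  rw [laplacian_comp_stereoMap b hhom (hV.contDiffAt (hs.mem_nhds hy)), hharm _ hy]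
  simp

lemma exists_frame (ζ e₁ e₂ : E3) (hζ : ‖ζ‖ = 1) (he₁ : ‖e₁‖ = 1) (he₂ : ‖e₂‖ = 1)
    (he₁e₂ : ⟪e₁, e₂⟫ = 0) (hζe₁ : ⟪ζ, e₁⟫ = 0) (hζe₂ : ⟪ζ, e₂⟫ = 0) :
    ∃ b : OrthonormalBasis (Fin 3) ℝ E3, b 0 = e₁ ∧ b 1 = e₂ ∧ b 2 = ζ := by
  have ho : Orthonormal ℝ ![e₁, e₂, ζ] := by
    constructor
    · intro i; fin_cases i <;> simp [hζ, he₁, he₂]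
    · intro i j hij
      fin_cases i <;> fin_cases j <;>
        simp_all [real_inner_comm]
  obtain ⟨b, hb⟩ := Orthonormal.exists_orthonormalBasis_extension_of_card_eq (𝕜 := ℝ) (E := E3)
    (ι := Fin 3) (by simp) (v := ![e₁, e₂, ζ]) (s := Set.univ)
    (ho.comp _ Subtype.val_injective)
  exact ⟨b, by simpa using hb 0 trivial, by simpa using hb 1 trivial, by simpa using hb 2 trivial⟩

/-- Poisson integral representation on a spherical cap. -/
theorem poisson_representation_cap (ζ : E3) (hζ : ζ ∈ Metric.sphere (0 : E3) 1)
    (ρ : ℝ) (hρ0 : 0 < ρ) (hρ2 : ρ < 2)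
    (e₁ e₂ : E3) (he₁ : ‖e₁‖ = 1) (he₂ : ‖e₂‖ = 1) (he₁e₂ : ⟪e₁, e₂⟫ = 0)
    (hζe₁ : ⟪ζ, e₁⟫ = 0) (hζe₂ : ⟪ζ, e₂⟫ = 0)
    (c : ℝ → E3)
    (hc : ∀ θ : ℝ, c θ = (1 - ρ) • ζ + Real.sqrt (ρ * (2 - ρ)) •
      (Real.cos θ • e₁ + Real.sin θ • e₂))
    (U : E3 → ℝ) (V : E3 → ℝ) (hV : ∀ x : E3, V x = U (‖x‖⁻¹ • x))
    (Γ' : Set E3) (hΓ'sub : Γ' ⊆ Metric.sphere (0 : E3) 1)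
    (hΓ'open : IsOpen {p : Metric.sphere (0 : E3) 1 | (p : E3) ∈ Γ'})
    (hΓ'cap : {η : E3 | η ∈ Metric.sphere (0 : E3) 1 ∧ 1 - ⟪ζ, η⟫ ≤ ρ} ⊆ Γ')
    (hV2 : ContDiffOn ℝ 2 V (cone Γ'))
    (hharm : ∀ x ∈ cone (cap ρ ζ), lap V x = 0) :
    ∀ ξ ∈ cap ρ ζ,
      U ξ = ((⟪ξ, ζ⟫ + ρ - 1) / (2 * π)) *
        ∫ θ in (0:ℝ)..(2 * π), U (c θ) / (1 - ⟪ξ, c θ⟫) := by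
  intro ξ hξ
  obtain ⟨b, rfl, rfl, rfl⟩ := exists_frame ζ e₁ e₂ (by simpa using hζ) he₁ he₂ he₁e₂ hζe₁ hζe₂
  have hhom : ∀ (t : ℝ) (x : E3), 0 < t → V (t • x) = V x := by
    intro t x ht
    rw [hV, hV, norm_smul, smul_smul, Real.norm_of_nonneg ht.le, mul_inv, mul_right_comm,
      inv_mul_cancel₀ ht.ne', one_mul]
  have hVU : ∀ (t : ℝ) (x : E3), 0 < t → ‖x‖ = 1 → V (t • x) = U x := by
    intro t x ht hx
    rw [hhom t x ht, hV, hx, inv_one, one_smul]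
  have hsub : cone (cap ρ (b 2)) ⊆ cone Γ' := fun x hx =>
    ⟨hx.1, hΓ'cap ⟨hx.2.1, hx.2.2.le⟩⟩
  have h2ρ : 0 < 2 - ρ := by linarith
  set R : ℝ := Real.sqrt (ρ / (2 - ρ)) with hR
  have hR2 : R ^ 2 = ρ / (2 - ρ) := Real.sq_sqrt (by positivity)
  have hR0 : 0 < R := Real.sqrt_pos.2 (by positivity)
  have hRs : (2 - ρ) * R = Real.sqrt (ρ * (2 - ρ)) := by
    rw [eq_comm, Real.sqrt_eq_iff_mul_self_eq (by positivity) (by positivity)]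
    have : (2 - ρ) * R ^ 2 = ρ := by rw [hR2]; field_simp
    linear_combination (-(2 - ρ)) * this
  have hsq : ∀ z : ℂ, z.re ^ 2 + z.im ^ 2 = ‖z‖ ^ 2 := fun z => by
    rw [Complex.sq_norm, Complex.normSq_apply]; ring
  have hne : ∀ z : ℂ, stereoMap b z ≠ 0 := fun z => by
    rw [← norm_pos_iff, norm_stereoMap]; positivity
  have hball : ∀ z ∈ Metric.ball (0 : ℂ) R, stereoMap b z ∈ cone (cap ρ (b 2)) := by
    intro z hz
    rw [mem_ball_zero_iff] at hz
    refine (mem_cone_cap_iff _ _ _).2 ⟨hne z, ?_⟩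
    rw [norm_stereoMap, inner_stereoMap, hsq]
    have : ‖z‖ ^ 2 < ρ / (2 - ρ) := by rw [← hR2]; gcongr
    rw [lt_div_iff₀ h2ρ] at this
    linarith
  have hclosed : ∀ z ∈ Metric.closedBall (0 : ℂ) R, stereoMap b z ∈ cone Γ' := by
    intro z hz
    rw [mem_closedBall_zero_iff] at hz
    have hn : 0 < ‖stereoMap b z‖ := norm_pos_iff.2 (hne z)
    refine ⟨hne z, hΓ'cap ⟨?_, ?_⟩⟩
    · simp [norm_smul, hn.ne']
    · rw [real_inner_smul_right, sub_le_comm, inv_mul_eq_div, le_div_iff₀ hn,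
        norm_stereoMap, inner_stereoMap, hsq]
      have : ‖z‖ ^ 2 ≤ ρ / (2 - ρ) := by rw [← hR2]; gcongr
      rw [le_div_iff₀ h2ρ] at this
      linarith
  have hHC : HarmonicContOnCl (V ∘ stereoMap b) (Metric.ball 0 R) :=
    HarmonicContOnCl.mk_ball
      (fun z hz => harmonicAt_comp_stereoMap b (isOpen_cone_cap _ _) hhom (hV2.mono hsub) hharm
        (hball z hz))
      (hV2.continuousOn.comp (contDiff_stereoMap b).continuous.continuousOn hclosed)
  -- The stereographic coordinate of `ξ`, written through its frame coordinates `x, y, h`.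
  obtain ⟨hξ1, hξ2⟩ := hξ
  have hξn : ‖ξ‖ = 1 := by simpa using hξ1
  set x := ⟪ξ, b 0⟫ with hx
  set y := ⟪ξ, b 1⟫ with hy
  set h := ⟪ξ, b 2⟫ with hh
  have hξe : ξ = x • b 0 + y • b 1 + h • b 2 := by
    have := b.sum_repr' ξ
    rw [Fin.sum_univ_three] at this
    simp only [real_inner_comm ξ] at this
    exact this.symm
  have hxyh : x ^ 2 + y ^ 2 + h ^ 2 = 1 := by
    have := b.sum_sq_inner_left ξ
    rw [Fin.sum_univ_three, hξn] at this
    linarith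
  have hhρ : 1 - h < ρ := by rw [hh, real_inner_comm]; exact hξ2
  have h1h : 0 < 1 + h := by linarith
  set w : ℂ := ⟨x / (1 + h), y / (1 + h)⟩ with hw
  have hw2 : ‖w‖ ^ 2 = (1 - h) / (1 + h) := by
    rw [← hsq]
    simp only [hw]
    field_simp
    linear_combination hxyh
  have hwP : stereoMap b w = (2 / (1 + h)) • ξ := by
    have e3 : 1 - (w.re ^ 2 + w.im ^ 2) = 2 / (1 + h) * h := by
      rw [hsq, hw2]; field_simp; ring
    rw [hξe, stereoMap, e3]
    simp only [hw]
    module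
  have hwR : w ∈ Metric.ball (0 : ℂ) R := by
    rw [mem_ball_zero_iff]
    refine lt_of_pow_lt_pow_left₀ 2 hR0.le ?_
    rw [hw2, hR2, div_lt_div_iff₀ h1h h2ρ]
    linarith
  have key := hHC.circleAverage_poissonKernel_smul hwR
  have hfw : (V ∘ stereoMap b) w = U ξ := by
    rw [Function.comp_apply, hwP, hVU _ _ (by positivity) hξn]
  rw [hfw, Real.circleAverage_def] at key
  rw [← key, smul_eq_mul, ← intervalIntegral.integral_const_mul,
    ← intervalIntegral.integral_const_mul]
  refine intervalIntegral.integral_congr fun θ _ => ?_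
  set z : ℂ := circleMap 0 R θ with hz
  have hzre : z.re = R * Real.cos θ := by simp [hz, circleMap_zero]
  have hzim : z.im = R * Real.sin θ := by simp [hz, circleMap_zero]
  have hzn : ‖z‖ = R := by simp [hz, abs_of_pos hR0]
  have hzP : stereoMap b z = (2 / (2 - ρ)) • c θ := by
    have e1 : 2 * z.re = 2 / (2 - ρ) * (Real.sqrt (ρ * (2 - ρ)) * Real.cos θ) := by
      rw [← hRs, hzre]; field_simp
    have e2 : 2 * z.im = 2 / (2 - ρ) * (Real.sqrt (ρ * (2 - ρ)) * Real.sin θ) := by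
      rw [← hRs, hzim]; field_simp
    have e3 : 1 - (z.re ^ 2 + z.im ^ 2) = 2 / (2 - ρ) * (1 - ρ) := by
      rw [hsq, hzn, hR2]; field_simp; ring
    rw [hc, stereoMap, e1, e2, e3]
    module
  have hcn : ‖c θ‖ = 1 := by
    have := norm_stereoMap b z
    rw [hzP, hsq, hzn, hR2, norm_smul, Real.norm_of_nonneg (by positivity)] at this
    field_simp at this
    linarith
  have hfz : (V ∘ stereoMap b) z = U (c θ) := by
    rw [Function.comp_apply, hzP, hVU _ _ (by positivity) hcn]
  have hξc : ⟪ξ, c θ⟫ = (1 - ρ) * h + (2 - ρ) * (z.re * x + z.im * y) := by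
    rw [hc, ← hRs, hzre, hzim]
    simp only [inner_add_right, real_inner_smul_right, ← hx, ← hy, ← hh]
    ring
  -- Chordal distance formula for stereographic projection.
  have hzw : ‖z - w‖ ^ 2 = 2 * (1 - ⟪ξ, c θ⟫) / ((2 - ρ) * (1 + h)) := by
    have hexp : ‖z - w‖ ^ 2 = ‖z‖ ^ 2 + ‖w‖ ^ 2 - 2 * (z.re * w.re + z.im * w.im) := by
      rw [← hsq, ← hsq, ← hsq, Complex.sub_re, Complex.sub_im]; ring
    rw [hexp, hzn, hR2, hw2, hξc]
    simp only [hw]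
    field_simp
    ring
  have hpk : poissonKernel 0 w z = (h + ρ - 1) / (1 - ⟪ξ, c θ⟫) := by
    have hpos : 0 < ‖z - w‖ ^ 2 := by
      have : z ≠ w := by
        intro hzw'
        rw [mem_ball_zero_iff, ← hzw', hzn] at hwR
        exact lt_irrefl _ hwR
      have := norm_pos_iff.2 (sub_ne_zero.2 this)
      positivity
    have hD : 1 - ⟪ξ, c θ⟫ ≠ 0 := by
      intro h0
      rw [hzw, h0] at hpos
      simp at hpos
    rw [poissonKernel_def, sub_zero, sub_zero, hzw, hzn, hR2, hw2]
    field_simp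
    ring
  simp only [Pi.smul_apply', smul_eq_mul, hfz, hpk]
  ring

end
end

section
/- Harmonicity of the double-layer potential off the boundary circle: Let ζ ∈ S², ρ ∈ (0,2), let e₁, e₂ be an orthonormal pair perpendicular to ζ, set c(θ) = (1−ρ)ζ + √(ρ(2−ρ))·(cos θ · e₁ + sin θ · e₂), and let Q : S² → ℝ be continuous. Define W̃(x) = (1/(4π))·∫₀^{2π} (ζ − (1−ρ)c(θ)) · (x̂ − (x̂·c(θ))c(θ)) / (1 − x̂·c(θ)) · Q(c(θ)) dθ, where x̂ = x/‖x‖, for x in the open set D = {x ∈ ℝ³ : x ≠ 0 and ζ·(x/‖x‖) ≠ 1−ρ}. Then W̃ is twice continuously differentiable on D and its Euclidean Laplacian vanishes on D; i.e., the double-layer potential is harmonic with respect to the Beltrami operator on S² away from the boundary circle of the cap. -/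
/-!
For a unit vector `c` and `ν ⟂ c`, multiplying through by `‖x‖` turns the integrand into the kernel
`h(x) = ν·x / g(x)` with `g(x) = ‖x‖ - c·x`. Since `|∇g|² = 2g/‖x‖`, `Δg = 2/‖x‖` and
`ν·∇g = ν·x/‖x‖`, one gets `Δh = 2 ν·∇(1/g) + (ν·x) Δ(1/g) = -2 ν·x/(‖x‖g²) + 2 ν·x/(‖x‖g²) = 0`
(`sum_dlKer''`). On the boundary circle `ζ·c = 1 - ρ`, so `ζ - (1 - ρ) c ⟂ c`; and equality in
Cauchy–Schwarz shows that `g` vanishes only when `x / ‖x‖ = c`, which is excluded on `D`. The kernel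
and its first two derivatives in `x` are therefore jointly continuous on `D × ℝ`, and one may
differentiate twice under the integral sign (`hasFDerivAt_param_integral`).
-/

open MeasureTheory Real intervalIntegral
open scoped RealInnerProductSpace

noncomputable section

open Set Filter Topology
open scoped Interval

/-! ### Integrals depending on a parameter -/

/-- A function jointly continuous on `U × ℝ`, `U` open, has continuous slices and, by compactness,
is bounded near each parameter uniformly in `t ∈ Ι a b`; by dominated convergence its integral
over the interval depends continuously on the parameter. -/
lemma continuousOn_param_integral {G : Type*} [NormedAddCommGroup G] [NormedSpace ℝ G]
    {U : Set E3} (hU : IsOpen U) (F : E3 → ℝ → G)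
    (hF : ContinuousOn (fun p : E3 × ℝ => F p.1 p.2) (U ×ˢ univ)) (a b : ℝ) :
    (∀ x ∈ U, Continuous (F x)) ∧
    (∀ x ∈ U, ∃ C : ℝ, ∃ s ∈ 𝓝 x, s ⊆ U ∧ ∀ y ∈ s, ∀ t ∈ Ι a b, ‖F y t‖ ≤ C) ∧
    ContinuousOn (fun x => ∫ t in a..b, F x t) U := by
  have h1 : ∀ x ∈ U, Continuous (F x) := by
    intro x hx
    rw [← continuousOn_univ]
    exact hF.comp (f := fun t : ℝ => (x, t)) (by fun_prop) (fun t _ => ⟨hx, mem_univ _⟩)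
  have h2 : ∀ x ∈ U, ∃ C : ℝ, ∃ s ∈ 𝓝 x, s ⊆ U ∧ ∀ y ∈ s, ∀ t ∈ Ι a b, ‖F y t‖ ≤ C := by
    intro x hx
    obtain ⟨ε, hε, hball⟩ := Metric.nhds_basis_closedBall.mem_iff.1 (hU.mem_nhds hx)
    have hK : IsCompact (Metric.closedBall x ε ×ˢ uIcc a b) :=
      (isCompact_closedBall x ε).prod isCompact_uIcc
    obtain ⟨C, hC⟩ := hK.exists_bound_of_continuousOn
      (hF.mono (prod_mono hball (subset_univ _)))
    exact ⟨C, _, Metric.closedBall_mem_nhds x hε, hball,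
      fun y hy t ht => hC (y, t) ⟨hy, uIoc_subset_uIcc ht⟩⟩
  refine ⟨h1, h2, fun x hx => ContinuousAt.continuousWithinAt ?_⟩
  obtain ⟨C, s, hs, -, hC⟩ := h2 x hx
  refine continuousAt_of_dominated_interval (bound := fun _ => C) ?_ ?_ (by simp) ?_
  · filter_upwards [hU.mem_nhds hx] with y hy
    exact (h1 y hy).aestronglyMeasurable
  · filter_upwards [hs] with y hy
    exact Eventually.of_forall fun t ht => hC y hy t ht
  · refine Eventually.of_forall fun t _ => ?_
    exact (hF.continuousAt ((hU.prod isOpen_univ).mem_nhds ⟨hx, mem_univ t⟩)).comp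
      (f := fun y => (y, t)) (by fun_prop)

/-- Differentiation under the integral sign for a jointly continuous partial derivative. -/
lemma hasFDerivAt_param_integral {U : Set E3} (hU : IsOpen U) (F : E3 → ℝ → ℝ)
    (F' : E3 → ℝ → E3 →L[ℝ] ℝ)
    (hF : ContinuousOn (fun p : E3 × ℝ => F p.1 p.2) (U ×ˢ univ))
    (hF' : ContinuousOn (fun p : E3 × ℝ => F' p.1 p.2) (U ×ˢ univ))
    (hd : ∀ x ∈ U, ∀ t, HasFDerivAt (fun y => F y t) (F' x t) x) (a b : ℝ) {x : E3} (hx : x ∈ U) :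
    HasFDerivAt (fun y => ∫ t in a..b, F y t) (∫ t in a..b, F' x t) x := by
  obtain ⟨h1, -, -⟩ := continuousOn_param_integral hU F hF a b
  obtain ⟨h1', h2', -⟩ := continuousOn_param_integral hU F' hF' a b
  obtain ⟨C, s, hs, hsU, hC⟩ := h2' x hx
  refine intervalIntegral.hasFDerivAt_integral_of_dominated_of_fderiv_le (bound := fun _ => C)
    hs ?_ ((h1 x hx).intervalIntegrable _ _) (h1' x hx).aestronglyMeasurable
    (Eventually.of_forall fun t ht y hy => hC y hy t ht) (by simp)
    (Eventually.of_forall fun t _ y hy => hd y (hsU hy) t)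
  filter_upwards [hU.mem_nhds hx] with y hy
  exact (h1 y hy).aestronglyMeasurable

/-! ### The kernel and its harmonicity -/

/-- The degree-zero homogeneous double-layer kernel `ν·x / (‖x‖ - c·x)`: the numerator is
tangential at the unit vector `c` when `ν ⟂ c`. -/
def dlKer (ν c x : E3) : ℝ := ⟪ν, x⟫ * (‖x‖ - ⟪c, x⟫)⁻¹

/-- The derivative of `x ↦ ‖x‖ - c·x`. -/
def dGap (c x : E3) : E3 →L[ℝ] ℝ := ‖x‖⁻¹ • innerSL ℝ x - innerSL ℝ c

/-- The derivative of `dlKer ν c`. -/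
def dlKer' (ν c x : E3) : E3 →L[ℝ] ℝ :=
  (‖x‖ - ⟪c, x⟫)⁻¹ • innerSL ℝ ν - (⟪ν, x⟫ * ((‖x‖ - ⟪c, x⟫) ^ 2)⁻¹) • dGap c x

/-- The derivative of `x ↦ dlKer' ν c x v`. -/
def dlKer'' (ν c v x : E3) : E3 →L[ℝ] ℝ :=
  (-((‖x‖ - ⟪c, x⟫) ^ 2)⁻¹ * ⟪ν, v⟫) • dGap c x
    - (((‖x‖ - ⟪c, x⟫) ^ 2)⁻¹ * dGap c x v) • innerSL ℝ ν
    + (2 * ⟪ν, x⟫ * ((‖x‖ - ⟪c, x⟫) ^ 3)⁻¹ * dGap c x v) • dGap c x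
    - (⟪ν, x⟫ * ((‖x‖ - ⟪c, x⟫) ^ 2)⁻¹) •
      (‖x‖⁻¹ • innerSL ℝ v - (⟪x, v⟫ * (‖x‖ ^ 3)⁻¹) • innerSL ℝ x)

lemma hasFDerivAt_norm_E3 {x : E3} (hx : x ≠ 0) :
    HasFDerivAt (fun y : E3 => ‖y‖) (‖x‖⁻¹ • innerSL ℝ x) x := by
  have h := (hasStrictFDerivAt_norm_sq x).hasFDerivAt.sqrt (by simpa using hx)
  simp only [Real.sqrt_sq (norm_nonneg _)] at h
  convert! h using 1
  ext v
  simp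
  ring

lemma hasFDerivAt_inner_left (c x : E3) :
    HasFDerivAt (fun y : E3 => ⟪c, y⟫) (innerSL ℝ c) x :=
  (innerSL ℝ c).hasFDerivAt

lemma hasFDerivAt_gap (c : E3) {x : E3} (hx : x ≠ 0) :
    HasFDerivAt (fun y : E3 => ‖y‖ - ⟪c, y⟫) (dGap c x) x :=
  (hasFDerivAt_norm_E3 hx).sub (hasFDerivAt_inner_left c x)

lemma hasFDerivAt_dlKer (ν c : E3) {x : E3} (hx : x ≠ 0) (hg : ‖x‖ - ⟪c, x⟫ ≠ 0) :
    HasFDerivAt (dlKer ν c) (dlKer' ν c x) x := by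
  have h := (hasFDerivAt_inner_left ν x).mul
    ((hasDerivAt_inv hg).comp_hasFDerivAt x (hasFDerivAt_gap c hx))
  convert! h using 1
  ext v
  simp [dlKer']
  ring

lemma hasFDerivAt_dlKer' (ν c v : E3) {x : E3} (hx : x ≠ 0) (hg : ‖x‖ - ⟪c, x⟫ ≠ 0) :
    HasFDerivAt (fun y => dlKer' ν c y v) (dlKer'' ν c v x) x := by
  have hr : ‖x‖ ≠ 0 := norm_ne_zero_iff.2 hx
  have hi := (hasDerivAt_inv hg).comp_hasFDerivAt x (hasFDerivAt_gap c hx)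
  have hri := (hasDerivAt_inv hr).comp_hasFDerivAt x (hasFDerivAt_norm_E3 hx)
  have hL := (hri.mul (hasFDerivAt_inner_left v x)).sub_const ⟪c, v⟫
  have h := (hi.mul_const ⟪ν, v⟫).sub (((hasFDerivAt_inner_left ν x).mul (hi.mul hi)).mul hL)
  convert! h using 1
  · ext y
    simp [dlKer', dGap, real_inner_comm v, pow_two]
  · ext w
    simp [dlKer'', dGap, real_inner_comm v]
    field_simp
    ring

/-- The kernel is harmonic: with `g = ‖x‖ - c·x` one has `|∇g|² = 2g/‖x‖`, `Δg = 2/‖x‖` and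
`ν·∇g = ν·x/‖x‖`, and the terms of `Δ(ν·x / g)` cancel. -/
lemma sum_dlKer'' {ν c x : E3} (hx : x ≠ 0) (hg : ‖x‖ - ⟪c, x⟫ ≠ 0) (hc : ‖c‖ = 1)
    (hν : ⟪ν, c⟫ = 0) :
    ∑ i : Fin 3, dlKer'' ν c (EuclideanSpace.single i 1) x (EuclideanSpace.single i 1) = 0 := by
  have hr : ‖x‖ ≠ 0 := norm_ne_zero_iff.2 hx
  have hxx : ‖x‖ ^ 2 = x 0 ^ 2 + x 1 ^ 2 + x 2 ^ 2 := by
    simp [EuclideanSpace.real_norm_sq_eq, Fin.sum_univ_three]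
  have hcc : 1 = c 0 ^ 2 + c 1 ^ 2 + c 2 ^ 2 := by
    have : ‖c‖ ^ 2 = c 0 ^ 2 + c 1 ^ 2 + c 2 ^ 2 := by
      simp [EuclideanSpace.real_norm_sq_eq, Fin.sum_univ_three]
    rw [← this, hc]; norm_num
  have hip : ∀ u v : E3, ⟪u, v⟫ = u 0 * v 0 + u 1 * v 1 + u 2 * v 2 := by
    intro u v
    simp [PiLp.inner_apply, Fin.sum_univ_three]
    ring
  have hsingle : ∀ (u : E3) (i : Fin 3), ⟪u, EuclideanSpace.single i (1 : ℝ)⟫ = u i := by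
    intro u i
    simp [EuclideanSpace.inner_single_right]
  have hcx := hip c x
  have hνx := hip ν x
  have hνc := hip ν c
  rw [hν] at hνc
  set r := ‖x‖ with hrd
  set s := ⟪ν, x⟫ with hs
  set k := ⟪c, x⟫ with hk
  obtain ⟨g, hgd⟩ : ∃ g, g = r - k := ⟨_, rfl⟩
  have hgrad : ∀ i : Fin 3, dGap c x (EuclideanSpace.single i 1) = r⁻¹ * x i - c i := by
    intro i
    simp [dGap, ← hrd, hsingle]
  have e : ∀ i : Fin 3, dlKer'' ν c (EuclideanSpace.single i 1) x (EuclideanSpace.single i 1)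
      = -2 * (g ^ 2)⁻¹ * (ν i * (r⁻¹ * x i - c i)) +
        2 * s * (g ^ 3)⁻¹ * (r⁻¹ * x i - c i) ^ 2 -
        s * (g ^ 2)⁻¹ * (r⁻¹ - x i ^ 2 * (r ^ 3)⁻¹) := by
    intro i
    simp [dlKer'', hgrad, hsingle, ← hrd, ← hs, ← hk, ← hgd]
    ring
  have e1 : ν 0 * (r⁻¹ * x 0 - c 0) + ν 1 * (r⁻¹ * x 1 - c 1) + ν 2 * (r⁻¹ * x 2 - c 2)
      = r⁻¹ * s := by
    linear_combination -r⁻¹ * hνx + hνc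
  have e2 : (r⁻¹ * x 0 - c 0) ^ 2 + (r⁻¹ * x 1 - c 1) ^ 2 + (r⁻¹ * x 2 - c 2) ^ 2
      = 2 * g * r⁻¹ := by
    have : r⁻¹ * r = 1 := inv_mul_cancel₀ hr
    rw [hgd]
    linear_combination -r⁻¹ ^ 2 * hxx - hcc + 2 * r⁻¹ * hcx + (r⁻¹ * r - 1) * this
  have e3 : (r⁻¹ - x 0 ^ 2 * (r ^ 3)⁻¹) + (r⁻¹ - x 1 ^ 2 * (r ^ 3)⁻¹)
      + (r⁻¹ - x 2 ^ 2 * (r ^ 3)⁻¹) = 2 * r⁻¹ := by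
    have : r ^ 2 * (r ^ 3)⁻¹ = r⁻¹ := by field_simp
    linear_combination (r ^ 3)⁻¹ * hxx - this
  have hg' : g ≠ 0 := hgd ▸ hg
  rw [Fin.sum_univ_three, e, e, e]
  have e4 : (g ^ 3)⁻¹ * g = (g ^ 2)⁻¹ := by field_simp
  linear_combination -2 * (g ^ 2)⁻¹ * e1 + 2 * s * (g ^ 3)⁻¹ * e2 - s * (g ^ 2)⁻¹ * e3
    + 4 * s * r⁻¹ * e4

/-! ### The double-layer potential -/

/-- A superposition `x ↦ ∫ q(t) (ν(t)·x) / (‖x‖ - c(t)·x) dt` of kernels with unit poles `c(t)`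
and `ν(t) ⟂ c(t)` is `C²` and harmonic wherever the kernels are nonsingular. -/
lemma contDiffOn_lap_integral_dlKer {U : Set E3} (hU : IsOpen U) {ν c : ℝ → E3} {q : ℝ → ℝ}
    (hν : Continuous ν) (hc : Continuous c) (hq : Continuous q)
    (hc1 : ∀ t, ‖c t‖ = 1) (hνc : ∀ t, ⟪ν t, c t⟫ = 0)
    (h0 : ∀ x ∈ U, x ≠ 0) (hg : ∀ x ∈ U, ∀ t, ‖x‖ - ⟪c t, x⟫ ≠ 0) (a b : ℝ) :
    ContDiffOn ℝ 2 (fun x => ∫ t in a..b, q t * dlKer (ν t) (c t) x) U ∧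
    ∀ x ∈ U, lap (fun x => ∫ t in a..b, q t * dlKer (ν t) (c t) x) x = 0 := by
  have hr' : ∀ p ∈ U ×ˢ (univ : Set ℝ), ‖p.1‖ ≠ 0 := fun p hp => norm_ne_zero_iff.2 (h0 _ hp.1)
  have hr3' : ∀ p ∈ U ×ˢ (univ : Set ℝ), ‖p.1‖ ^ 3 ≠ 0 := fun p hp => pow_ne_zero _ (hr' p hp)
  have hg' : ∀ p ∈ U ×ˢ (univ : Set ℝ), ‖p.1‖ - ⟪c p.2, p.1⟫ ≠ 0 := fun p hp => hg _ hp.1 _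
  have hg2' : ∀ p ∈ U ×ˢ (univ : Set ℝ), (‖p.1‖ - ⟪c p.2, p.1⟫) ^ 2 ≠ 0 :=
    fun p hp => pow_ne_zero _ (hg' p hp)
  have hg3' : ∀ p ∈ U ×ˢ (univ : Set ℝ), (‖p.1‖ - ⟪c p.2, p.1⟫) ^ 3 ≠ 0 :=
    fun p hp => pow_ne_zero _ (hg' p hp)
  have cF : ContinuousOn (fun p : E3 × ℝ => q p.2 * dlKer (ν p.2) (c p.2) p.1) (U ×ˢ univ) := by
    unfold dlKer
    fun_prop (disch := assumption)
  have cG : ContinuousOn (fun p : E3 × ℝ => dGap (c p.2) p.1) (U ×ˢ univ) := by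
    unfold dGap
    fun_prop (disch := assumption)
  have cF' : ContinuousOn (fun p : E3 × ℝ => q p.2 • dlKer' (ν p.2) (c p.2) p.1)
      (U ×ˢ univ) := by
    unfold dlKer'
    fun_prop (disch := assumption)
  have cF'v : ∀ v, ContinuousOn (fun p : E3 × ℝ => q p.2 * dlKer' (ν p.2) (c p.2) p.1 v)
      (U ×ˢ univ) := fun v => cF'.clm_apply continuousOn_const
  have cF'' : ∀ v, ContinuousOn (fun p : E3 × ℝ => q p.2 • dlKer'' (ν p.2) (c p.2) v p.1)
      (U ×ˢ univ) := by
    intro v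
    unfold dlKer''
    fun_prop (disch := assumption)
  have d1 : ∀ x ∈ U, HasFDerivAt (fun x => ∫ t in a..b, q t * dlKer (ν t) (c t) x)
      (∫ t in a..b, q t • dlKer' (ν t) (c t) x) x := fun x hx =>
    hasFDerivAt_param_integral hU (fun x t => q t * dlKer (ν t) (c t) x)
      (fun x t => q t • dlKer' (ν t) (c t) x) cF cF'
      (fun y hy t => (hasFDerivAt_dlKer _ _ (h0 y hy) (hg y hy t)).const_mul _) a b hx
  have d2 : ∀ v, ∀ x ∈ U, HasFDerivAt (fun x => ∫ t in a..b, q t * dlKer' (ν t) (c t) x v)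
      (∫ t in a..b, q t • dlKer'' (ν t) (c t) v x) x := fun v x hx =>
    hasFDerivAt_param_integral hU (fun x t => q t * dlKer' (ν t) (c t) x v)
      (fun x t => q t • dlKer'' (ν t) (c t) v x) (cF'v v) (cF'' v)
      (fun y hy t => (hasFDerivAt_dlKer' _ _ v (h0 y hy) (hg y hy t)).const_mul _) a b hx
  have f1 : ∀ v, ∀ x ∈ U, fderiv ℝ (fun x => ∫ t in a..b, q t * dlKer (ν t) (c t) x) x v
      = ∫ t in a..b, q t * dlKer' (ν t) (c t) x v := by
    intro v x hx
    rw [(d1 x hx).fderiv, ContinuousLinearMap.intervalIntegral_apply]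
    · rfl
    · exact ((continuousOn_param_integral hU
        (fun x t => q t • dlKer' (ν t) (c t) x) cF' a b).1 x hx).intervalIntegrable _ _
  refine ⟨?_, fun x hx => ?_⟩
  · rw [show (2 : WithTop ℕ∞) = 1 + 1 by norm_num, contDiffOn_succ_iff_fderiv_of_isOpen hU]
    refine ⟨fun x hx => (d1 x hx).differentiableAt.differentiableWithinAt, by simp, ?_⟩
    rw [contDiffOn_clm_apply]
    intro v
    refine ContDiffOn.congr ?_ (f1 v)
    rw [show (1 : WithTop ℕ∞) = 0 + 1 by norm_num, contDiffOn_succ_iff_fderiv_of_isOpen hU]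
    refine ⟨fun x hx => (d2 v x hx).differentiableAt.differentiableWithinAt, by simp, ?_⟩
    rw [contDiffOn_zero]
    exact (continuousOn_param_integral hU
        (fun x t => q t • dlKer'' (ν t) (c t) v x) (cF'' v) a b).2.2.congr
      fun x hx => (d2 v x hx).fderiv
  · have hcv : ∀ v, IntervalIntegrable (fun t => q t • dlKer'' (ν t) (c t) v x) volume a b :=
      fun v => ((continuousOn_param_integral hU
        (fun x t => q t • dlKer'' (ν t) (c t) v x) (cF'' v) a b).1 x hx).intervalIntegrable _ _
    have f2 : ∀ v, fderiv ℝ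
        (fun y => fderiv ℝ (fun x => ∫ t in a..b, q t * dlKer (ν t) (c t) x) y v) x v
        = ∫ t in a..b, q t * dlKer'' (ν t) (c t) v x v := by
      intro v
      have : (fun y => fderiv ℝ (fun x => ∫ t in a..b, q t * dlKer (ν t) (c t) x) y v)
          =ᶠ[𝓝 x] fun x => ∫ t in a..b, q t * dlKer' (ν t) (c t) x v := by
        filter_upwards [hU.mem_nhds hx] with y hy using f1 v y hy
      rw [this.fderiv_eq, (d2 v x hx).fderiv, ContinuousLinearMap.intervalIntegral_apply (hcv v)]
      rfl
    unfold lap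
    simp_rw [f2]
    rw [← intervalIntegral.integral_finsetSum]
    · simp_rw [← Finset.mul_sum, sum_dlKer'' (h0 x hx) (hg x hx _) (hc1 _) (hνc _)]
      simp
    · intro i _
      exact ((((continuousOn_param_integral hU
        (fun x t => q t • dlKer'' (ν t) (c t) (EuclideanSpace.single i 1) x) (cF'' _) a b).1 x hx).clm_apply
        continuous_const)).intervalIntegrable _ _

/-- Harmonicity of the double-layer potential off the boundary circle. -/
theorem double_layer_harmonic (ζ : E3) (hζ : ζ ∈ Metric.sphere (0 : E3) 1)
    (ρ : ℝ) (hρ0 : 0 < ρ) (hρ2 : ρ < 2)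
    (e₁ e₂ : E3) (he₁ : ‖e₁‖ = 1) (he₂ : ‖e₂‖ = 1) (he₁e₂ : ⟪e₁, e₂⟫ = 0)
    (hζe₁ : ⟪ζ, e₁⟫ = 0) (hζe₂ : ⟪ζ, e₂⟫ = 0)
    (c : ℝ → E3)
    (hc : ∀ θ : ℝ, c θ = (1 - ρ) • ζ + Real.sqrt (ρ * (2 - ρ)) •
      (Real.cos θ • e₁ + Real.sin θ • e₂))
    (Q : E3 → ℝ) (hQ : ContinuousOn Q (Metric.sphere (0 : E3) 1))
    (D : Set E3) (hD : D = {x : E3 | x ≠ 0 ∧ ⟪ζ, ‖x‖⁻¹ • x⟫ ≠ 1 - ρ})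
    (W : E3 → ℝ)
    (hW : ∀ x ∈ D,
      W x = (1 / (4 * π)) * ∫ θ in (0:ℝ)..(2 * π),
        (⟪ζ - (1 - ρ) • c θ, ‖x‖⁻¹ • x - ⟪‖x‖⁻¹ • x, c θ⟫ • c θ⟫ /
          (1 - ⟪‖x‖⁻¹ • x, c θ⟫)) * Q (c θ)) :
    ContDiffOn ℝ 2 W D ∧ ∀ x ∈ D, lap W x = 0 := by
  have hζ1 : ‖ζ‖ = 1 := by simpa using hζ
  have hζζ : ⟪ζ, ζ⟫ = 1 := by rw [real_inner_self_eq_norm_sq, hζ1]; norm_num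
  have h11 : ⟪e₁, e₁⟫ = 1 := by rw [real_inner_self_eq_norm_sq, he₁]; norm_num
  have h22 : ⟪e₂, e₂⟫ = 1 := by rw [real_inner_self_eq_norm_sq, he₂]; norm_num
  have h21 : ⟪e₂, e₁⟫ = 0 := by rw [real_inner_comm, he₁e₂]
  have h1ζ : ⟪e₁, ζ⟫ = 0 := by rw [real_inner_comm, hζe₁]
  have h2ζ : ⟪e₂, ζ⟫ = 0 := by rw [real_inner_comm, hζe₂]
  have hsq : √(ρ * (2 - ρ)) ^ 2 = ρ * (2 - ρ) := Real.sq_sqrt (by nlinarith)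
  have hcont : Continuous c := by
    rw [funext hc]
    fun_prop
  have hcc : ∀ t, ⟪c t, c t⟫ = 1 := by
    intro t
    rw [hc t]
    simp only [inner_add_left, inner_add_right, inner_smul_left, inner_smul_right, hζζ, h11, h22,
      h21, h1ζ, h2ζ, he₁e₂, hζe₁, hζe₂]
    simp
    linear_combination (Real.sin t ^ 2 + Real.cos t ^ 2) * hsq
      + ρ * (2 - ρ) * Real.sin_sq_add_cos_sq t
  have hc1 : ∀ t, ‖c t‖ = 1 := by
    intro t
    have := hcc t
    rw [real_inner_self_eq_norm_sq] at this
    exact (pow_eq_one_iff_of_nonneg (norm_nonneg _) two_ne_zero).1 this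
  have hζc : ∀ t, ⟪ζ, c t⟫ = 1 - ρ := by
    intro t
    rw [hc t]
    simp [inner_add_right, inner_smul_right, hζe₁, hζe₂, hζ1]
  have hνc : ∀ t, ⟪ζ - (1 - ρ) • c t, c t⟫ = 0 := by
    intro t
    rw [inner_sub_left, inner_smul_left, hζc, hcc]
    simp
  have hq : Continuous fun t => Q (c t) :=
    hQ.comp_continuous hcont fun t => by simp [hc1 t]
  have h0 : ∀ x ∈ D, x ≠ 0 := by
    intro x hx
    rw [hD] at hx
    exact hx.1
  have hg : ∀ x ∈ D, ∀ t, ‖x‖ - ⟪c t, x⟫ ≠ 0 := by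
    intro x hx t h
    -- Equality in Cauchy–Schwarz forces `x / ‖x‖ = c t`, which lies on the boundary circle.
    have hx' := hx
    rw [hD] at hx'
    have hr : ‖x‖ ≠ 0 := norm_ne_zero_iff.2 hx'.1
    have := (inner_eq_norm_mul_iff_real (x := c t) (y := x)).1 (by rw [hc1]; linarith)
    rw [hc1, one_smul] at this
    apply hx'.2
    rw [show ‖x‖⁻¹ • x = c t by
      rw [inv_smul_eq_iff₀ hr, this], hζc]
  have hDo : IsOpen D := by
    have : D = {x : E3 | x ≠ 0} ∩ {x : E3 | ⟪ζ, x⟫ ≠ (1 - ρ) * ‖x‖} := by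
      rw [hD]
      ext x
      simp only [mem_ofPred_eq, mem_inter_iff]
      refine and_congr_right fun hx => not_congr ?_
      have hr : ‖x‖ ≠ 0 := norm_ne_zero_iff.2 hx
      rw [inner_smul_right]
      field_simp
    rw [this]
    exact isOpen_ne.inter (isOpen_ne_fun (by fun_prop) (by fun_prop))
  obtain ⟨hC, hL⟩ := contDiffOn_lap_integral_dlKer hDo
    (ν := fun t => ζ - (1 - ρ) • c t) (q := fun t => (1 / (4 * π)) * Q (c t))
    (by fun_prop) hcont (continuous_const.mul hq) hc1 hνc h0 hg 0 (2 * π)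
  have hWeq : ∀ x ∈ D, W x = ∫ t in (0:ℝ)..(2 * π),
      (1 / (4 * π)) * Q (c t) * dlKer (ζ - (1 - ρ) • c t) (c t) x := by
    intro x hx
    rw [hW x hx, ← intervalIntegral.integral_const_mul]
    refine intervalIntegral.integral_congr fun t _ => ?_
    have hr : ‖x‖ ≠ 0 := norm_ne_zero_iff.2 (h0 x hx)
    have hgt := hg x hx t
    have e : 1 - ‖x‖⁻¹ * ⟪c t, x⟫ = ‖x‖⁻¹ * (‖x‖ - ⟪c t, x⟫) := by field_simp
    simp only [dlKer]
    rw [inner_sub_right, inner_smul_right, inner_smul_right, hνc, real_inner_comm (c t),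
      inner_smul_right, e]
    field_simp
    ring
  refine ⟨hC.congr hWeq, fun x hx => ?_⟩
  rw [← hL x hx]
  -- `lap` at `x` only depends on the germ of the function at `x`.
  have hev : W =ᶠ[𝓝 x] fun x => ∫ t in (0:ℝ)..(2 * π),
      (1 / (4 * π)) * Q (c t) * dlKer (ζ - (1 - ρ) • c t) (c t) x := by
    filter_upwards [hDo.mem_nhds hx] with y hy using hWeq y hy
  unfold lap
  refine Finset.sum_congr rfl fun i _ => ?_
  exact DFunLike.congr_fun ((hev.fderiv (𝕜 := ℝ)).fun_comp
    (fun L : E3 →L[ℝ] ℝ => L (EuclideanSpace.single i 1))).fderiv_eq _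

end
end
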